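/- Let a, b, c ∈ ℝ and set Q₁(t) = at² + bt + c, Q₂(t) = at² + bt + c + 1. On an open set U ⊆ ℝ² where R¹ ≠ R², Q₁(R¹) > 0 and Q₂(R²) < 0, consider the metric with inverse coefficients G¹¹ = (R¹ − R²)²Q₁(R¹) and G²² = −(R¹ − R²)²Q₂(R²). Then: (i) the coefficients defined by ∂₂G¹¹ = −2AG¹¹ and ∂₁G²² = −2BG²² are A = 1/(R¹ − R²) and B = 1/(R² − R¹), independent of a, b, c; (ii) the constant-curvature-one condition (∂₂A + A²)G²² + (A/2)∂₂G²² + (∂₁B + B²)G¹¹ + (B/2)∂₁G¹¹ + 1 = 0 holds on U for all a, b, c; and (iii) the functions k¹ = R², k² = R¹ satisfy (∂₂k¹)/(k² − k¹) = 1/(R¹ − R²) and (∂₁k²)/(k¹ − k²) = 1/(R² − R¹) on U. -/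

import Mathlib

/-- First partial derivative `∂₁ = ∂/∂R¹` of a function on `ℝ²`. -/
noncomputable def pd1 (f : ℝ × ℝ → ℝ) (p : ℝ × ℝ) : ℝ := fderiv ℝ f p (1, 0)

/-- Second partial derivative `∂₂ = ∂/∂R²` of a function on `ℝ²`. -/
noncomputable def pd2 (f : ℝ × ℝ → ℝ) (p : ℝ × ℝ) : ℝ := fderiv ℝ f p (0, 1)

theorem pd1_eq {f : ℝ × ℝ → ℝ} {x y d : ℝ} (hf : DifferentiableAt ℝ f (x, y))
    (h : HasDerivAt (fun t => f (t, y)) d x) : pd1 f (x, y) = d := by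
  have h1 : HasDerivAt (fun t : ℝ => (t, y)) ((1 : ℝ), (0 : ℝ)) x :=
    (hasDerivAt_id x).prodMk (hasDerivAt_const x y)
  exact (hf.hasFDerivAt.comp_hasDerivAt (f := fun t : ℝ => (t, y)) x h1).unique h

theorem pd2_eq {f : ℝ × ℝ → ℝ} {x y d : ℝ} (hf : DifferentiableAt ℝ f (x, y))
    (h : HasDerivAt (fun t => f (x, t)) d y) : pd2 f (x, y) = d := by
  have h1 : HasDerivAt (fun t : ℝ => (x, t)) ((0 : ℝ), (1 : ℝ)) y :=
    (hasDerivAt_const y x).prodMk (hasDerivAt_id y)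
  exact (hf.hasFDerivAt.comp_hasDerivAt (f := fun t : ℝ => (x, t)) y h1).unique h

/-- For the metric of the cyclids of Dupin, with
`G¹¹ = (R¹ − R²)²Q₁(R¹)`, `G²² = −(R¹ − R²)²Q₂(R²)`,
`Q₁(t) = at² + bt + c`, `Q₂(t) = at² + bt + c + 1`:
(i) `A = 1/(R¹ − R²)`, `B = 1/(R² − R¹)`, independent of `a, b, c`;
(ii) the constant-curvature-one condition holds for all `a, b, c`;
(iii) `k¹ = R²`, `k² = R¹` satisfy the corresponding Codazzi system. -/
theorem dupin_cyclids (a b c : ℝ) (Q1 Q2 : ℝ → ℝ)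
    (hQ1 : ∀ t, Q1 t = a * t ^ 2 + b * t + c)
    (hQ2 : ∀ t, Q2 t = a * t ^ 2 + b * t + c + 1)
    (U : Set (ℝ × ℝ)) (hUopen : IsOpen U)
    (hU : ∀ p ∈ U, p.1 ≠ p.2 ∧ 0 < Q1 p.1 ∧ Q2 p.2 < 0)
    (G11 G22 A B k1 k2 : ℝ × ℝ → ℝ)
    (hG11 : ∀ p : ℝ × ℝ, G11 p = (p.1 - p.2) ^ 2 * Q1 p.1)
    (hG22 : ∀ p : ℝ × ℝ, G22 p = -((p.1 - p.2) ^ 2 * Q2 p.2))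
    (hA : ∀ p : ℝ × ℝ, A p = 1 / (p.1 - p.2))
    (hB : ∀ p : ℝ × ℝ, B p = 1 / (p.2 - p.1))
    (hk1 : ∀ p : ℝ × ℝ, k1 p = p.2)
    (hk2 : ∀ p : ℝ × ℝ, k2 p = p.1) :
    (∀ p ∈ U, pd2 G11 p = -2 * A p * G11 p ∧ pd1 G22 p = -2 * B p * G22 p) ∧
    (∀ p ∈ U,
      (pd2 A p + A p ^ 2) * G22 p + A p / 2 * pd2 G22 p +
        (pd1 B p + B p ^ 2) * G11 p + B p / 2 * pd1 G11 p + 1 = 0) ∧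
    (∀ p ∈ U,
      pd2 k1 p / (k2 p - k1 p) = 1 / (p.1 - p.2) ∧
      pd1 k2 p / (k1 p - k2 p) = 1 / (p.2 - p.1)) := by
  obtain rfl : Q1 = fun t => a * t ^ 2 + b * t + c := funext hQ1
  obtain rfl : Q2 = fun t => a * t ^ 2 + b * t + c + 1 := funext hQ2
  obtain rfl := funext hG11
  obtain rfl := funext hG22
  obtain rfl := funext hA
  obtain rfl := funext hB
  obtain rfl := funext hk1
  obtain rfl := funext hk2
  have hq : ∀ e t : ℝ, HasDerivAt (fun t : ℝ => a * t ^ 2 + b * t + e) (2 * a * t + b) t := by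
    intro e t
    have := ((((hasDerivAt_id t).pow 2).const_mul a).add
      ((hasDerivAt_id t).const_mul b)).add_const e
    refine this.congr_deriv ?_
    simp
    ring
  have hs1 : ∀ x y : ℝ, HasDerivAt (fun t : ℝ => t - y) 1 x := fun x y =>
    (hasDerivAt_id x).sub_const y
  have hs2 : ∀ x y : ℝ, HasDerivAt (fun t : ℝ => x - t) (-1) y := fun x y =>
    (hasDerivAt_id y).const_sub x
  have hp1 : ∀ x y : ℝ, HasDerivAt (fun t : ℝ => (t - y) ^ 2) (2 * (x - y)) x := fun x y =>
    ((hs1 x y).fun_pow 2).congr_deriv (by simp)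
  have hp2 : ∀ x y : ℝ, HasDerivAt (fun t : ℝ => (x - t) ^ 2) (-(2 * (x - y))) y := fun x y =>
    ((hs2 x y).fun_pow 2).congr_deriv (by simp)
  have hG1 : ∀ x y : ℝ, DifferentiableAt ℝ
      (fun p : ℝ × ℝ => (p.1 - p.2) ^ 2 * (a * p.1 ^ 2 + b * p.1 + c)) (x, y) := by
    intro x y; fun_prop
  have hG2 : ∀ x y : ℝ, DifferentiableAt ℝ
      (fun p : ℝ × ℝ => -((p.1 - p.2) ^ 2 * (a * p.2 ^ 2 + b * p.2 + c + 1))) (x, y) := by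
    intro x y; fun_prop
  have hq2 : ∀ t : ℝ, HasDerivAt (fun t : ℝ => a * t ^ 2 + b * t + c + 1) (2 * a * t + b) t :=
    fun t => (hq c t).add_const 1
  refine ⟨?_, ?_, ?_⟩
  · rintro ⟨x, y⟩ hp
    have hne : x - y ≠ 0 := sub_ne_zero.2 (hU _ hp).1
    have hne' : y - x ≠ 0 := sub_ne_zero.2 (hU _ hp).1.symm
    rw [pd2_eq (hG1 x y) ((hp2 x y).mul_const (a * x ^ 2 + b * x + c)),
      pd1_eq (hG2 x y) ((hp1 x y).mul_const (a * y ^ 2 + b * y + c + 1)).fun_neg]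
    have e : y - x = -(x - y) := by ring
    constructor
    · simp
      field_simp
    · simp only [e]
      simp
      field_simp
      ring
  · rintro ⟨x, y⟩ hp
    have hne : x - y ≠ 0 := sub_ne_zero.2 (hU _ hp).1
    have hne' : y - x ≠ 0 := sub_ne_zero.2 (hU _ hp).1.symm
    have dA : DifferentiableAt ℝ (fun p : ℝ × ℝ => 1 / (p.1 - p.2)) (x, y) := by
      fun_prop (disch := exact hne)
    have dB : DifferentiableAt ℝ (fun p : ℝ × ℝ => 1 / (p.2 - p.1)) (x, y) := by
      fun_prop (disch := exact hne')
    rw [pd2_eq dA ((hasDerivAt_const y (1 : ℝ)).fun_div (hs2 x y) hne),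
      pd1_eq dB ((hasDerivAt_const x (1 : ℝ)).fun_div (hs2 y x) hne'),
      pd2_eq (hG2 x y) ((hp2 x y).fun_mul (hq2 y)).fun_neg,
      pd1_eq (hG1 x y) ((hp1 x y).fun_mul (hq c x))]
    have e : y - x = -(x - y) := by ring
    simp only [e]
    simp
    field_simp
    ring
  · rintro ⟨x, y⟩ hp
    rw [pd2_eq (by fun_prop) (hasDerivAt_id y), pd1_eq (by fun_prop) (hasDerivAt_id x)]
    exact ⟨rfl, rfl⟩
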